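/- For every information structure u, every garbling q ∈ 𝒬, and every payoff function g ∈ 𝒢: val(q.u, g) ≤ val(u, g) ≤ val(u.q, g). That is, the value is weakly decreasing when player 1's (the maximizer's) signal is garbled and weakly increasing when player 2's signal is garbled. -/

import Mathlib

open scoped BigOperators ENNReal

namespace ValueDistance

/-- An information structure: a probability distribution on `K × ℕ × ℕ`
(state, signal of player 1, signal of player 2). -/
abbrev InfoStruct (K : Type) := PMF (K × ℕ × ℕ)

/-- A behavior strategy / garbling : a map `ℕ → Δ(ℕ)`. -/
abbrev Garbling : Type := ℕ → PMF ℕ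

variable {K : Type}

/-- `g` is a payoff function with action bound `L` : values in `[-1,1]`,
`g k i j = -1` when `i ≥ L`, and `g k i j = 1` when `i < L` and `j ≥ L`. -/
def IsPayoffL (L : ℕ) (g : K → ℕ → ℕ → ℝ) : Prop :=
  (∀ k i j, g k i j ∈ Set.Icc (-1 : ℝ) 1) ∧
  (∀ k i j, L ≤ i → g k i j = -1) ∧
  (∀ k i j, i < L → L ≤ j → g k i j = 1)

/-- `g` belongs to the set `𝒢` of payoff functions. -/
def IsPayoff (g : K → ℕ → ℕ → ℝ) : Prop := ∃ L, IsPayoffL L g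

/-- `g` belongs to the set `𝒢₁` of single-agent (player 1) problems. -/
def IsPayoff1 (g : K → ℕ → ℕ → ℝ) : Prop :=
  IsPayoff g ∧ ∀ k i j j', g k i j = g k i j'

/-- Expected payoff in the Bayesian game `Γ(u,g)` when player 1 uses the behavior
strategy `σ` and player 2 uses `τ`. -/
noncomputable def payoff (u : InfoStruct K) (g : K → ℕ → ℕ → ℝ)
    (σ τ : Garbling) : ℝ :=
  ∑' (x : K × ℕ × ℕ) (i : ℕ) (j : ℕ),
    (u x).toReal * (σ x.2.1 i).toReal * (τ x.2.2 j).toReal * g x.1 i j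

/-- The value `val(u,g)` of the zero-sum Bayesian game `Γ(u,g)`
(the common value of `sup inf` and `inf sup` of the expected payoff;
we take `sup inf` as the definition). -/
noncomputable def val (u : InfoStruct K) (g : K → ℕ → ℕ → ℝ) : ℝ :=
  ⨆ σ : Garbling, ⨅ τ : Garbling, payoff u g σ τ

/-- Total variation distance `‖u − v‖`. -/
noncomputable def tv {α : Type} (u v : PMF α) : ℝ :=
  ∑' x : α, |(u x).toReal - (v x).toReal|

/-- `q.u` : player 1's signal garbled through `q`. -/
noncomputable def garbleLeft (q : Garbling) (u : InfoStruct K) : InfoStruct K :=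
  u.bind (fun x => (q x.2.1).map (fun c => (x.1, c, x.2.2)))

/-- `u.q` : player 2's signal garbled through `q`. -/
noncomputable def garbleRight (u : InfoStruct K) (q : Garbling) : InfoStruct K :=
  u.bind (fun x => (q x.2.2).map (fun d => (x.1, x.2.1, d)))

/-- The value-based distance `d(u,v) = sup_{g ∈ 𝒢} |val(u,g) − val(v,g)|`. -/
noncomputable def dVal (u v : InfoStruct K) : ℝ :=
  ⨆ g : {g : K → ℕ → ℕ → ℝ // IsPayoff g}, |val u g.1 - val v g.1|

/-- The single-agent distance `d₁(u,v) = sup_{g ∈ 𝒢₁} |val(u,g) − val(v,g)|`. -/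
noncomputable def d1 (u v : InfoStruct K) : ℝ :=
  ⨆ g : {g : K → ℕ → ℕ → ℝ // IsPayoff1 g}, |val u g.1 - val v g.1|

/-- Marginal of an information structure on `K × ℕ` (state, player 1's signal). -/
noncomputable def marg1 (u : InfoStruct K) : PMF (K × ℕ) :=
  u.map (fun x => (x.1, x.2.1))

/-- Garbling of a single-agent information structure:
`(q.w)(k,c) = Σ_s w(k,s)·q(s)({c})`. -/
noncomputable def garble1 (q : Garbling) (w : PMF (K × ℕ)) : PMF (K × ℕ) :=
  w.bind (fun x => (q x.2).map (fun c => (x.1, c)))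

/-- Marginal of an information structure on the states. -/
noncomputable def margK (u : InfoStruct K) : PMF K := u.map Prod.fst

/-- Marginal of an information structure on `K × ℕ` (state, player 2's signal). -/
noncomputable def margKD (u : InfoStruct K) : PMF (K × ℕ) :=
  u.map (fun x => (x.1, x.2.2))

/-- `σ.q` : on signal `c`, draw `c'` according to `q(c)` and play `σ(c')`. -/
noncomputable def compGarble (σ q : Garbling) : Garbling :=
  fun c => (q c).bind σ

/-- `u ∈ 𝒰(L)` : both players' signals are `< L` with probability 1. -/
def InU (L : ℕ) (u : InfoStruct K) : Prop :=
  ∀ x : K × ℕ × ℕ, u x ≠ 0 → x.2.1 < L ∧ x.2.2 < L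

/-- `q ∈ 𝒬(L)` : garbling with values supported on `{0,…,L−1}`. -/
def GarblingIn (L : ℕ) (q : Garbling) : Prop :=
  ∀ n m, q n m ≠ 0 → m < L

/-- The two players' signals are conditionally independent given the state:
`u(k)·u(k,c,d) = u(k,c)·u(k,d)` for all `k, c, d`
(equivalently `u(c,d|k) = u(c|k)·u(d|k)` whenever `u(k) > 0`). -/
def CondIndep (u : InfoStruct K) : Prop :=
  ∀ (k : K) (c d : ℕ),
    (∑' y : ℕ × ℕ, u (k, y)) * u (k, c, d)
      = (∑' d' : ℕ, u (k, c, d')) * (∑' c' : ℕ, u (k, c', d))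

end ValueDistance

namespace ValueDistance

/-!
A strategy for the player whose signal is garbled by `q` can be simulated without the garbling: draw
a fake signal from `q` and play the original strategy on it. The payoff stays the same (for player 2
this needs Fubini, as player 1 draws first), so against each fixed strategy of the opponent the
payoffs attainable with the garbled signal are among those attainable with the original one.
-/

section Expectation

variable {α β : Type*} {C : ℝ}

/-- The expectation of `f` under the discrete distribution `p`. It is written as a series rather
than a Bochner integral so that `α` needs no `σ`-algebra; it is `0` if the family is not
summable. -/
noncomputable def expectation (p : PMF α) (f : α → ℝ) : ℝ :=
  ∑' x, (p x).toReal * f x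

lemma hasSum_pmf_toReal (p : PMF α) : HasSum (fun x ↦ (p x).toReal) 1 := by
  simpa [← ENNReal.tsum_toReal_eq p.apply_ne_top] using
    ENNReal.hasSum_toReal p.tsum_coe_ne_top

lemma norm_toReal_mul_le (w : ℝ≥0∞) {r : ℝ} (hr : |r| ≤ C) : ‖w.toReal * r‖ ≤ w.toReal * C := by
  rw [norm_mul, Real.norm_of_nonneg ENNReal.toReal_nonneg, Real.norm_eq_abs]
  gcongr

lemma abs_expectation_le (p : PMF α) {f : α → ℝ} (hf : ∀ x, |f x| ≤ C) :
    |expectation p f| ≤ C := by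
  have hC : HasSum (fun x ↦ (p x).toReal * C) C := by simpa using (hasSum_pmf_toReal p).mul_right C
  exact tsum_of_norm_bounded hC fun x ↦ norm_toReal_mul_le (p x) (hf x)

lemma summable_toReal_mul_toReal_mul (p : PMF α) (κ : α → PMF β) {h : α → β → ℝ}
    (hh : ∀ a b, |h a b| ≤ C) :
    Summable (Function.uncurry fun a b ↦ (p a).toReal * (κ a b).toReal * h a b) := by
  have hjoint : ∑' x : α × β, p x.1 * κ x.1 x.2 ≠ ∞ := by
    simp [ENNReal.tsum_prod', ENNReal.tsum_mul_left]
  refine .of_norm_bounded ((ENNReal.summable_toReal hjoint).mul_right C) fun x ↦ ?_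
  rw [Function.uncurry, ← ENNReal.toReal_mul]
  exact norm_toReal_mul_le _ (hh x.1 x.2)

lemma expectation_expectation_eq_tsum (p : PMF α) (κ : α → PMF β) {h : α → β → ℝ}
    (hh : ∀ a b, |h a b| ≤ C) :
    expectation p (fun a ↦ expectation (κ a) (h a)) =
      ∑' b, ∑' a, (p a).toReal * (κ a b).toReal * h a b := by
  rw [(summable_toReal_mul_toReal_mul p κ hh).tsum_comm]
  simp only [expectation, mul_assoc, tsum_mul_left]

lemma expectation_comm (p : PMF α) (r : PMF β) {h : α → β → ℝ} (hh : ∀ a b, |h a b| ≤ C) :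
    expectation p (fun a ↦ expectation r (h a)) =
      expectation r (fun b ↦ expectation p (h · b)) := by
  rw [expectation_expectation_eq_tsum p (fun _ ↦ r) hh]
  simp only [expectation, ← tsum_mul_left, mul_left_comm, mul_assoc]

lemma expectation_bind (p : PMF α) (κ : α → PMF β) {f : β → ℝ} (hf : ∀ b, |f b| ≤ C) :
    expectation (p.bind κ) f = expectation p (fun a ↦ expectation (κ a) f) := by
  rw [expectation_expectation_eq_tsum p κ fun _ ↦ hf]
  refine tsum_congr fun b ↦ ?_
  have hne_top (a : α) : p a * κ a b ≠ ∞ :=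
    ENNReal.mul_ne_top (p.apply_ne_top a) ((κ a).apply_ne_top b)
  simp only [PMF.bind_apply, ENNReal.tsum_toReal_eq hne_top, ENNReal.toReal_mul, tsum_mul_right]

lemma expectation_pure (a : α) (f : α → ℝ) : expectation (PMF.pure a) f = f a := by
  rw [expectation, tsum_eq_single a fun b hb ↦ by simp [hb]]
  simp

lemma expectation_map (p : PMF α) (φ : α → β) {f : β → ℝ} (hf : ∀ b, |f b| ≤ C) :
    expectation (p.map φ) f = expectation p (fun a ↦ f (φ a)) := by
  simp only [PMF.map, expectation_bind _ _ hf, Function.comp_apply, expectation_pure]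

end Expectation

section Payoff

variable {K : Type} {g : K → ℕ → ℕ → ℝ} {C : ℝ}

/-- The expected payoff conditional on the state and the two signals `x = (k, c, d)`. -/
noncomputable def interimPayoff (g : K → ℕ → ℕ → ℝ) (σ τ : Garbling) (x : K × ℕ × ℕ) : ℝ :=
  expectation (σ x.2.1) fun i ↦ expectation (τ x.2.2) (g x.1 i)

lemma payoff_eq_expectation_interimPayoff (u : InfoStruct K) (g : K → ℕ → ℕ → ℝ)
    (σ τ : Garbling) : payoff u g σ τ = expectation u (interimPayoff g σ τ) := by
  simp only [payoff, interimPayoff, expectation, mul_assoc, tsum_mul_left]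

lemma abs_interimPayoff_le (hg : ∀ k i j, |g k i j| ≤ C) (σ τ : Garbling) (x : K × ℕ × ℕ) :
    |interimPayoff g σ τ x| ≤ C :=
  abs_expectation_le _ fun i ↦ abs_expectation_le _ (hg x.1 i)

lemma abs_payoff_le (hg : ∀ k i j, |g k i j| ≤ C) (u : InfoStruct K) (σ τ : Garbling) :
    |payoff u g σ τ| ≤ C := by
  rw [payoff_eq_expectation_interimPayoff]
  exact abs_expectation_le u (abs_interimPayoff_le hg σ τ)

lemma interimPayoff_compGarble_left (hg : ∀ k i j, |g k i j| ≤ C) (σ τ q : Garbling)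
    (k : K) (c d : ℕ) :
    interimPayoff g (compGarble σ q) τ (k, c, d) =
      expectation (q c) (fun c' ↦ interimPayoff g σ τ (k, c', d)) :=
  expectation_bind _ _ fun i ↦ abs_expectation_le _ (hg k i)

lemma interimPayoff_compGarble_right (hg : ∀ k i j, |g k i j| ≤ C) (σ τ q : Garbling)
    (k : K) (c d : ℕ) :
    interimPayoff g σ (compGarble τ q) (k, c, d) =
      expectation (q d) (fun d' ↦ interimPayoff g σ τ (k, c, d')) :=
  calc
    _ = expectation (σ c) (fun i ↦ expectation (q d) fun d' ↦ expectation (τ d') (g k i)) := by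
      simp only [interimPayoff, compGarble, expectation_bind _ _ (hg k _)]
    _ = _ := expectation_comm _ _ fun i _ ↦ abs_expectation_le _ (hg k i)

lemma payoff_garbleLeft (hg : ∀ k i j, |g k i j| ≤ C) (q : Garbling) (u : InfoStruct K)
    (σ τ : Garbling) : payoff (garbleLeft q u) g σ τ = payoff u g (compGarble σ q) τ := by
  have hb := abs_interimPayoff_le hg σ τ
  simp only [payoff_eq_expectation_interimPayoff, garbleLeft, expectation_bind _ _ hb,
    expectation_map _ _ hb, ← interimPayoff_compGarble_left hg, Prod.mk.eta]

lemma payoff_garbleRight (hg : ∀ k i j, |g k i j| ≤ C) (u : InfoStruct K) (q : Garbling)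
    (σ τ : Garbling) : payoff (garbleRight u q) g σ τ = payoff u g σ (compGarble τ q) := by
  have hb := abs_interimPayoff_le hg σ τ
  simp only [payoff_eq_expectation_interimPayoff, garbleRight, expectation_bind _ _ hb,
    expectation_map _ _ hb, ← interimPayoff_compGarble_right hg, Prod.mk.eta]

end Payoff

section Value

variable {K : Type} {g : K → ℕ → ℕ → ℝ} {C : ℝ}

lemma bddBelow_range_payoff (hg : ∀ k i j, |g k i j| ≤ C) (u : InfoStruct K) (σ : Garbling) :
    BddBelow (Set.range fun τ ↦ payoff u g σ τ) :=
  ⟨-C, Set.forall_mem_range.2 fun τ ↦ (abs_le.1 (abs_payoff_le hg u σ τ)).1⟩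

lemma bddAbove_range_iInf_payoff (hg : ∀ k i j, |g k i j| ≤ C) (u : InfoStruct K) :
    BddAbove (Set.range fun σ ↦ ⨅ τ, payoff u g σ τ) := by
  refine ⟨C, Set.forall_mem_range.2 fun σ ↦ ?_⟩
  exact (ciInf_le (bddBelow_range_payoff hg u σ) default).trans
    (abs_le.1 (abs_payoff_le hg u σ default)).2

lemma val_garbleLeft_le (hg : ∀ k i j, |g k i j| ≤ C) (q : Garbling) (u : InfoStruct K) :
    val (garbleLeft q u) g ≤ val u g := by
  simp only [val, payoff_garbleLeft hg]
  exact ciSup_le fun σ ↦ le_ciSup (bddAbove_range_iInf_payoff hg u) (compGarble σ q)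

lemma le_val_garbleRight (hg : ∀ k i j, |g k i j| ≤ C) (u : InfoStruct K) (q : Garbling) :
    val u g ≤ val (garbleRight u q) g := by
  refine ciSup_mono (bddAbove_range_iInf_payoff hg _) fun σ ↦ le_ciInf fun τ ↦ ?_
  rw [payoff_garbleRight hg]
  exact ciInf_le (bddBelow_range_payoff hg u σ) (compGarble τ q)

/-- `val` is a supremum of infima; when `g` is merely bounded it need not equal the infimum of the
suprema. -/
theorem val_monotone_garbling_general (hg : ∀ k i j, |g k i j| ≤ C) (u : InfoStruct K)
    (q : Garbling) : val (garbleLeft q u) g ≤ val u g ∧ val u g ≤ val (garbleRight u q) g :=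
  ⟨val_garbleLeft_le hg q u, le_val_garbleRight hg u q⟩

end Value

/-- Monotonicity of the value in information: garbling the maximizer's signal
weakly decreases the value and garbling the minimizer's signal weakly
increases it: `val(q.u, g) ≤ val(u, g) ≤ val(u.q, g)`. -/
theorem val_monotone_garbling (K : Type) [Fintype K]
    (hK : 2 ≤ Fintype.card K) (u : InfoStruct K) (q : Garbling)
    (g : K → ℕ → ℕ → ℝ) (hg : IsPayoff g) :
    val (garbleLeft q u) g ≤ val u g ∧ val u g ≤ val (garbleRight u q) g := by
  obtain ⟨_, hbound, -⟩ := hg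
  exact val_monotone_garbling_general (fun k i j ↦ abs_le.2 (hbound k i j)) u q

end ValueDistance
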